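/- Let e be a natural number and let A, B, C be abelian groups with group homomorphisms a : ℤ^e → A, b : ℤ^e → B, p : A → C, q : B → C, and f : A → B, satisfying: p is surjective; the kernel of q is contained in the image of b; q ∘ f = p; and f(a(v)) = 2·b(v) for every v ∈ ℤ^e. Then the cokernel B/f(A) is isomorphic to a quotient of (ℤ/2ℤ)^e; in particular every element of B/f(A) is killed by 2 and B/f(A) has at most 2^e elements. -/

import Mathlib

/-- Given abelian groups `A`, `B`, `C` with homomorphisms `a : ℤ^e → A`,
`b : ℤ^e → B`, `p : A → C`, `q : B → C`, `f : A → B` such that `p` is surjective, `ker q ⊆ im b`,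
`q ∘ f = p` and `f (a v) = 2 • b v` for all `v`, the cokernel `B ⧸ f(A)` is a quotient of
`(ℤ/2ℤ)^e`; in particular it is killed by `2` and has at most `2^e` elements. -/
theorem cokernel_quotient_of_two_torsion (e : ℕ) (A B C : Type*)
    [AddCommGroup A] [AddCommGroup B] [AddCommGroup C]
    (a : (Fin e → ℤ) →+ A) (b : (Fin e → ℤ) →+ B)
    (p : A →+ C) (q : B →+ C) (f : A →+ B)
    (hp : Function.Surjective p)
    (hker : ∀ x : B, q x = 0 → x ∈ Set.range b)
    (hqf : ∀ x : A, q (f x) = p x)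
    (hfa : ∀ v : Fin e → ℤ, f (a v) = 2 • b v) :
    (∃ φ : (Fin e → ZMod 2) →+ B ⧸ f.range, Function.Surjective φ) ∧
    (∀ y : B ⧸ f.range, 2 • y = 0) ∧
    Finite (B ⧸ f.range) ∧ Nat.card (B ⧸ f.range) ≤ 2 ^ e := by
  have hg : Function.Surjective ((QuotientAddGroup.mk' f.range).comp b) := by
    intro y
    obtain ⟨x, rfl⟩ := QuotientAddGroup.mk'_surjective f.range y
    obtain ⟨z, hz⟩ := hp (q x)
    obtain ⟨v, hv⟩ := hker (x - f z) (by rw [map_sub, hqf, hz, sub_self])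
    refine ⟨v, ?_⟩
    have h0 : QuotientAddGroup.mk' f.range (f z) = 0 :=
      (QuotientAddGroup.eq_zero_iff (f z)).2 ⟨z, rfl⟩
    rw [AddMonoidHom.comp_apply, hv, map_sub, h0, sub_zero]
  have h2 : ∀ v, 2 • ((QuotientAddGroup.mk' f.range).comp b) v = 0 := by
    intro v
    rw [AddMonoidHom.comp_apply, ← map_nsmul, ← hfa]
    exact (QuotientAddGroup.eq_zero_iff (f (a v))).2 ⟨a v, rfl⟩
  generalize (QuotientAddGroup.mk' f.range).comp b = g at hg h2
  have hc : ∀ u v : Fin e → ℤ, (∀ i, (u i : ZMod 2) = (v i : ZMod 2)) → g u = g v := by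
    intro u v h
    have h' : ∀ i, ∃ k : ℤ, u i - v i = 2 * k := by
      intro i
      have := (ZMod.intCast_eq_intCast_iff_dvd_sub (v i) (u i) 2).1 (h i).symm
      exact_mod_cast this
    choose k hk using h'
    have : u - v = 2 • k := by
      ext i
      simp [hk]
    rw [← sub_eq_zero, ← map_sub, this, map_nsmul, h2]
  have hφ : ∃ φ : (Fin e → ZMod 2) →+ B ⧸ f.range, Function.Surjective φ := by
    refine ⟨AddMonoidHom.mk' (fun w => g (fun i => ((w i).val : ℤ))) ?_, ?_⟩
    · intro w w'
      rw [← map_add]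
      apply hc
      intro i
      simp
    · intro y
      obtain ⟨v, rfl⟩ := hg y
      refine ⟨fun i => (v i : ZMod 2), ?_⟩
      apply hc
      intro i
      simp
  refine ⟨hφ, ?_, ?_⟩
  · intro y
    obtain ⟨v, rfl⟩ := hg y
    exact h2 v
  · obtain ⟨φ, h⟩ := hφ
    refine ⟨Finite.of_surjective φ h, ?_⟩
    have := Nat.card_le_card_of_surjective φ h
    simpa using this
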